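/- For every k with 0 ≤ k ≤ p − 2, if h_{k+1} = h_k − 1, then the squared shifted e-indices satisfy e_{k+1}² = e_k² − (c(k+1) − 2·h_k + 1). (Key identity in the proof of Proposition 4.8(ii)–(iii).) -/

import Mathlib

/-- The shifted h-index of order `k`: the largest `m` with `1 ≤ m ≤ p - k` and
`c (k + m) ≥ m` (the Hirsch h-index of the tail sequence `c (k+1), …, c p`).
Taken as the `sup` of the (finite) set of such `m`, which equals its maximum
when the set is nonempty and is `0` otherwise. -/
def hIdx (p : ℕ) (c : ℕ → ℕ) (k : ℕ) : ℕ :=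
  ((Finset.Icc 1 (p - k)).filter (fun m => m ≤ c (k + m))).sup id

/-- The shifted core sum `N_k = Σ_{j=k+1}^{k+h_k} c j`. -/
def coreSum (p : ℕ) (c : ℕ → ℕ) (k : ℕ) : ℕ :=
  ∑ j ∈ Finset.Icc (k + 1) (k + hIdx p c k), c j

/-- The shifted e-index `e_k = √(N_k − h_k²)`. -/
noncomputable def eIdx (p : ℕ) (c : ℕ → ℕ) (k : ℕ) : ℝ :=
  Real.sqrt ((coreSum p c k : ℝ) - (hIdx p c k : ℝ) ^ 2)

section

variable {p k : ℕ} {c : ℕ → ℕ}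

theorem hIdx_pos (hk : k < p) (hc : 0 < c (k + 1)) : 0 < hIdx p c k := by
  have one_mem : 1 ∈ (Finset.Icc 1 (p - k)).filter (fun m => m ≤ c (k + m)) :=
    Finset.mem_filter.mpr ⟨Finset.mem_Icc.mpr ⟨le_rfl, Nat.sub_pos_of_lt hk⟩, hc⟩
  exact Finset.le_sup (f := id) one_mem

theorem hIdx_le_sub (p : ℕ) (c : ℕ → ℕ) (k : ℕ) : hIdx p c k ≤ p - k :=
  Finset.sup_le fun _ hm => (Finset.mem_Icc.mp (Finset.mem_filter.mp hm).1).2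

theorem hIdx_le_apply_add_hIdx (p : ℕ) (c : ℕ → ℕ) (k : ℕ) :
    hIdx p c k ≤ c (k + hIdx p c k) := by
  refine Finset.sup_induction (p := fun m => m ≤ c (k + m)) (Nat.zero_le _) ?_
    fun _ hm => (Finset.mem_filter.mp hm).2
  intro m hm n hn
  rcases le_total m n with hmn | hnm
  · rwa [sup_eq_right.mpr hmn]
  · rwa [sup_eq_left.mpr hnm]

theorem sq_hIdx_le_coreSum (hc : AntitoneOn c (Set.Icc (k + 1) p)) :
    hIdx p c k ^ 2 ≤ coreSum p c k := by
  have hIdx_le_of_mem_core : ∀ j ∈ Finset.Icc (k + 1) (k + hIdx p c k), hIdx p c k ≤ c j := by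
    intro j hj
    obtain ⟨hkj, hjh⟩ := Finset.mem_Icc.mp hj
    have core_end_le : k + hIdx p c k ≤ p := by
      have := hIdx_le_sub p c k
      omega
    exact (hIdx_le_apply_add_hIdx p c k).trans
      (hc ⟨hkj, hjh.trans core_end_le⟩ ⟨hkj.trans hjh, core_end_le⟩ hjh)
  calc hIdx p c k ^ 2
      = (Finset.Icc (k + 1) (k + hIdx p c k)).card • hIdx p c k := by
        rw [Nat.card_Icc, Nat.add_right_comm, Nat.add_sub_cancel_left, smul_eq_mul, sq]
    _ ≤ coreSum p c k := Finset.card_nsmul_le_sum _ _ _ hIdx_le_of_mem_core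

theorem eIdx_sq (hc : AntitoneOn c (Set.Icc (k + 1) p)) :
    eIdx p c k ^ 2 = (coreSum p c k : ℝ) - (hIdx p c k : ℝ) ^ 2 :=
  Real.sq_sqrt (sub_nonneg.mpr (mod_cast sq_hIdx_le_coreSum hc))

theorem coreSum_eq_add_coreSum_succ (h : hIdx p c k = hIdx p c (k + 1) + 1) :
    coreSum p c k = c (k + 1) + coreSum p c (k + 1) := by
  have same_end : k + hIdx p c k = k + 1 + hIdx p c (k + 1) := by omega
  rw [coreSum, coreSum, same_end, ← Finset.add_sum_Ioc_eq_sum_Icc (Nat.le_add_right _ _),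
    ← Finset.Icc_add_one_left_eq_Ioc]

end

theorem stmt_9 (p : ℕ) (hp : 1 ≤ p) (c : ℕ → ℕ)
    (hmono : ∀ i j, 1 ≤ i → i ≤ j → j ≤ p → c j ≤ c i)
    (hpos : ∀ j, 1 ≤ j → j ≤ p → 1 ≤ c j)
    (hzero : ∀ j, p < j → c j = 0)
    (k : ℕ) (hk : k + 2 ≤ p)
    (hh : hIdx p c (k + 1) = hIdx p c k - 1) :
    eIdx p c (k + 1) ^ 2 =
      eIdx p c k ^ 2 - ((c (k + 1) : ℝ) - 2 * (hIdx p c k : ℝ) + 1) := by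
  have antitone_tail (i : ℕ) : AntitoneOn c (Set.Icc (i + 1) p) :=
    fun a ha b hb hab => hmono a b (le_of_add_le_right ha.1) hab hb.2
  have hIdx_k_pos : 0 < hIdx p c k := hIdx_pos (by omega) (hpos (k + 1) (by omega) (by omega))
  have hIdx_drop : hIdx p c k = hIdx p c (k + 1) + 1 := by omega
  rw [eIdx_sq (antitone_tail (k + 1)), eIdx_sq (antitone_tail k),
    coreSum_eq_add_coreSum_succ hIdx_drop, hIdx_drop]
  push_cast
  ring
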